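/- arXiv:1704.04900 — 3 statements merged into one kernel-verified Lean document; each statement's English description precedes it below -/
import Mathlib

section
/- Consider the linear time-invariant discrete-time plant x_{k+1} = A x_k + B û_k + w_k, y_{k+1} = C x_{k+1} + v_{k+1}, where the noises w_k and v_k are integrable random vectors with zero mean, and the deterministic reference system x_{ref,k+1} = A x_{ref,k} + B u_{ref,k}, y_{ref,k+1} = C x_{ref,k+1}. Suppose the system is square (l = p), B has full column rank p, the feedback gain L_{k+1} ∈ ℝ^{n×l} satisfies L_{k+1} C B = B, and the applied control is û_k = B† L_{k+1}(y_{ref,k+1} − C A x̂_{k|k}), where B† is the Moore–Penrose pseudoinverse of B and x̂_{k|k} is an integrable random state estimate. If the input estimate is unbiased, E[û_k] = u_{ref,k}, and the state estimate is unbiased, E[x̂_{k|k}] = E[x_k], and all random vectors involved are integrable, then the tracking error is unbiased: E[y_{ref,k+1} − y_{k+1}] = 0. -/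
open MeasureTheory Matrix

/-- The Moore–Penrose pseudoinverse, characterized by the four Penrose conditions. -/
def IsMoorePenrose {m p : ℕ} (A : Matrix (Fin m) (Fin p) ℝ)
    (Ad : Matrix (Fin p) (Fin m) ℝ) : Prop :=
  A * Ad * A = A ∧ Ad * A * Ad = Ad ∧ (A * Ad)ᵀ = A * Ad ∧ (Ad * A)ᵀ = Ad * A

/-- **Unbiased tracking for square systems (Proposition 1).**
For the plant `x_{k+1} = A x_k + B û_k + w_k`, `y_{k+1} = C x_{k+1} + v_{k+1}`
(zero-mean integrable noises), the deterministic reference system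
`x_{ref,k+1} = A x_{ref,k} + B u_{ref,k}`, `y_{ref,k+1} = C x_{ref,k+1}`,
a square system (`l = p`, encoded by using `Fin p` for the output index),
`B` of full column rank, a gain `L` with `L C B = B`, and the control law
`û_k = B† L (y_{ref,k+1} − C A x̂_{k|k})`, unbiasedness of the input estimate
(`E[û_k] = u_{ref,k}`) and of the state estimate (`E[x̂_{k|k}] = E[x_k]`)
imply the tracking error is unbiased: `E[y_{ref,k+1} − y_{k+1}] = 0`. -/
theorem unbiased_tracking_square_system
    {n p : ℕ}
    (A : Matrix (Fin n) (Fin n) ℝ) (B : Matrix (Fin n) (Fin p) ℝ)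
    (C : Matrix (Fin p) (Fin n) ℝ)
    (L : Matrix (Fin n) (Fin p) ℝ) (Bdag : Matrix (Fin p) (Fin n) ℝ)
    {Ω : Type*} [MeasurableSpace Ω] (μ : Measure Ω) [IsProbabilityMeasure μ]
    (xk xk1 xhat : Ω → Fin n → ℝ) (uhat : Ω → Fin p → ℝ)
    (w : Ω → Fin n → ℝ) (v : Ω → Fin p → ℝ) (yk1 : Ω → Fin p → ℝ)
    (xrefk xrefk1 : Fin n → ℝ) (uref : Fin p → ℝ) (yrefk1 : Fin p → ℝ)
    -- plant dynamics
    (hplant : ∀ ω, xk1 ω = A.mulVec (xk ω) + B.mulVec (uhat ω) + w ω)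
    (hout : ∀ ω, yk1 ω = C.mulVec (xk1 ω) + v ω)
    -- reference system
    (href : xrefk1 = A.mulVec xrefk + B.mulVec uref)
    (hrefout : yrefk1 = C.mulVec xrefk1)
    -- noises: integrable with zero mean
    (hw_int : Integrable w μ) (hv_int : Integrable v μ)
    (hw0 : (∫ ω, w ω ∂μ) = 0) (hv0 : (∫ ω, v ω ∂μ) = 0)
    -- integrability of all random vectors involved
    (hxk_int : Integrable xk μ) (hxk1_int : Integrable xk1 μ)
    (hxhat_int : Integrable xhat μ) (huhat_int : Integrable uhat μ)
    (hyk1_int : Integrable yk1 μ)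
    -- B has full column rank and Bdag is its Moore–Penrose pseudoinverse
    (hrank : B.rank = p)
    (hpinv : IsMoorePenrose B Bdag)
    -- the feedback gain satisfies L C B = B
    (hL : L * C * B = B)
    -- the applied control law
    (hctrl : ∀ ω, uhat ω = (Bdag * L).mulVec (yrefk1 - (C * A).mulVec (xhat ω)))
    -- unbiased input estimate and unbiased state estimate
    (huunb : (∫ ω, uhat ω ∂μ) = uref)
    (hxunb : (∫ ω, xhat ω ∂μ) = ∫ ω, xk ω ∂μ) :
    (∫ ω, (yrefk1 - yk1 ω) ∂μ) = 0 := by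
  have hint : ∀ {a b : ℕ} (M : Matrix (Fin a) (Fin b) ℝ) (f : Ω → Fin b → ℝ),
      Integrable f μ → Integrable (fun ω => M.mulVec (f ω)) μ ∧
        (∫ ω, M.mulVec (f ω) ∂μ) = M.mulVec (∫ ω, f ω ∂μ) := by
    intro a b M f hf
    exact ⟨(LinearMap.toContinuousLinearMap M.mulVecLin).integrable_comp hf,
      (LinearMap.toContinuousLinearMap M.mulVecLin).integral_comp_comm hf⟩
  have hinj : Function.Injective B.mulVec := by
    rw [Matrix.mulVec_injective_iff, linearIndependent_iff_card_eq_finrank_span,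
      Fintype.card_fin, Set.finrank, ← Matrix.rank_eq_finrank_span_cols, hrank]
  have hBB : Bdag * B = 1 := by
    apply Matrix.ext_of_mulVec_single
    intro i
    apply hinj
    simp only [Matrix.mulVec_mulVec, ← Matrix.mul_assoc, hpinv.1, Matrix.mul_one]
  have hleft : (Bdag * L) * (C * B) = 1 := by
    rw [← hBB, Matrix.mul_assoc, ← Matrix.mul_assoc L, hL]
  have hright : (C * B) * (Bdag * L) = 1 := mul_eq_one_comm.mp hleft
  have hu : (∫ ω, uhat ω ∂μ)
      = (Bdag * L).mulVec (yrefk1 - (C * A).mulVec (∫ ω, xk ω ∂μ)) := by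
    have h1 := hint (C * A) xhat hxhat_int
    simp_rw [hctrl]
    rw [(hint (Bdag * L) (fun ω => yrefk1 - (C * A).mulVec (xhat ω))
      ((integrable_const _).sub h1.1)).2, integral_sub (integrable_const _) h1.1, h1.2, hxunb]
    simp
  have hx : (∫ ω, xk1 ω ∂μ)
      = A.mulVec (∫ ω, xk ω ∂μ) + B.mulVec (∫ ω, uhat ω ∂μ) := by
    have h1 := hint A xk hxk_int
    have h2 := hint B uhat huhat_int
    simp_rw [hplant]
    have h3 : Integrable (fun ω => A.mulVec (xk ω) + B.mulVec (uhat ω)) μ := h1.1.add h2.1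
    rw [integral_add h3 hw_int, integral_add h1.1 h2.1, h1.2, h2.2, hw0, add_zero]
  have hy : (∫ ω, yk1 ω ∂μ) = C.mulVec (∫ ω, xk1 ω ∂μ) := by
    have h1 := hint C xk1 hxk1_int
    simp_rw [hout]
    rw [integral_add h1.1 hv_int, h1.2, hv0, add_zero]
  rw [integral_sub (integrable_const _) hyk1_int, hy, hx, hu, Matrix.mulVec_add,
    Matrix.mulVec_mulVec, Matrix.mulVec_mulVec, Matrix.mulVec_mulVec,
    hright, Matrix.one_mulVec]
  simp
end

section
/- Let V = C B ∈ ℝ^{l×p}, let R̃ ∈ ℝ^{l×l} be invertible, suppose Vᵀ R̃⁻¹ V ∈ ℝ^{p×p} is invertible, and define Π = (Vᵀ R̃⁻¹ V)⁻¹ Vᵀ R̃⁻¹ ∈ ℝ^{p×l}. Then for any F ∈ ℝ^{n×l}, the unbiased minimum-variance gain L = B Π + F R̃⁻¹ (I_l − V Π) satisfies L C B = B. -/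
open Matrix

/-- **The UMV gain satisfies `L C B = B` (eq. (20)).**
With `V = C B`, invertible `R̃`, invertible `Vᵀ R̃⁻¹ V`,
`Π = (Vᵀ R̃⁻¹ V)⁻¹ Vᵀ R̃⁻¹`, and `L = B Π + F R̃⁻¹ (I − V Π)` for any `F`,
one has `L (C B) = B`. -/
theorem umv_gain_LCB_eq_B
    {n p l : ℕ}
    (B : Matrix (Fin n) (Fin p) ℝ) (C : Matrix (Fin l) (Fin n) ℝ)
    (Rt : Matrix (Fin l) (Fin l) ℝ) (F : Matrix (Fin n) (Fin l) ℝ)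
    (V : Matrix (Fin l) (Fin p) ℝ) (Pi : Matrix (Fin p) (Fin l) ℝ)
    (L : Matrix (Fin n) (Fin l) ℝ)
    (hV : V = C * B)
    (hRt : IsUnit Rt.det)
    (hVRV : IsUnit (Vᵀ * Rt⁻¹ * V).det)
    (hPi : Pi = (Vᵀ * Rt⁻¹ * V)⁻¹ * Vᵀ * Rt⁻¹)
    (hLdef : L = B * Pi + F * Rt⁻¹ * (1 - V * Pi)) :
    L * (C * B) = B := by
  have h : Pi * V = 1 := by
    have h1 := Matrix.nonsing_inv_mul _ hVRV
    rw [hPi, Matrix.mul_assoc _ Vᵀ, Matrix.mul_assoc _ _ V]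
    exact h1
  rw [← hV, hLdef, Matrix.add_mul, Matrix.mul_assoc B, h, Matrix.mul_assoc (F * Rt⁻¹),
    Matrix.sub_mul, Matrix.mul_assoc V, h]
  simp
end

section
/- Suppose l < p and let N ∈ ℝ^{p×l} be a matrix with rank(N) = l whose columns belong to the row space of C B (the span of the rows of C B, viewed as vectors in ℝ^p). If the system x_{k+1} = A x_k + B u_k, y_k = C x_k is trackable, then the modified system x_{k+1} = A x_k + (B N) ũ_k, y_k = C x_k with input matrix B̃ = B N ∈ ℝ^{n×l} is also trackable. -/
open Matrix

/-- A system `(A, B, C)` is trackable if for every initial state and every reference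
output sequence `(y_ref,k)_{k≥1}` there is an input sequence whose trajectory from the
initial state satisfies `C x_k = y_ref,k` for all `k ≥ 1`. -/
def Trackable {n l p : ℕ} (A : Matrix (Fin n) (Fin n) ℝ) (B : Matrix (Fin n) (Fin p) ℝ)
    (C : Matrix (Fin l) (Fin n) ℝ) : Prop :=
  ∀ x0 : Fin n → ℝ, ∀ yref : ℕ → Fin l → ℝ,
    ∃ u : ℕ → Fin p → ℝ, ∃ x : ℕ → Fin n → ℝ,
      x 0 = x0 ∧ (∀ k, x (k + 1) = A.mulVec (x k) + B.mulVec (u k)) ∧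
        ∀ k, 1 ≤ k → C.mulVec (x k) = yref k

/-- **Trackability is preserved by squaring with a suitable `N` (`l < p`).**
If `l < p`, `N ∈ ℝ^{p×l}` has rank `l`, every column of `N` lies in the row space of
`C B`, and `(A, B, C)` is trackable, then the modified system `(A, B N, C)` is also
trackable. -/
theorem trackable_of_squared_system
    {n p l : ℕ}
    (A : Matrix (Fin n) (Fin n) ℝ) (B : Matrix (Fin n) (Fin p) ℝ)
    (C : Matrix (Fin l) (Fin n) ℝ)
    (hlp : l < p)
    (N : Matrix (Fin p) (Fin l) ℝ)
    (hrankN : N.rank = l)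
    (hcols : ∀ j : Fin l,
      Nᵀ j ∈ Submodule.span ℝ (Set.range fun i : Fin l => (C * B) i))
    (htrack : Trackable A B C) :
    Trackable A (B * N) C := by
  have hNinj : Function.Injective N.mulVec := by
    rw [Matrix.mulVec_injective_iff, linearIndependent_iff_card_eq_finrank_span,
      Fintype.card_fin]
    exact hrankN.symm.trans N.rank_eq_finrank_span_cols
  have hR : ∃ R : Matrix (Fin l) (Fin l) ℝ, N = (C * B)ᵀ * R := by
    have h : ∀ j : Fin l, ∃ c : Fin l → ℝ, ∑ i, c i • (C * B) i = Nᵀ j := fun j =>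
      (Submodule.mem_span_range_iff_exists_fun ℝ).1 (hcols j)
    choose c hc using h
    refine ⟨Matrix.of fun i j => c j i, ?_⟩
    ext a j
    have := congrFun (hc j) a
    simp only [Finset.sum_apply, Pi.smul_apply, smul_eq_mul, Matrix.transpose_apply] at this
    rw [← this, Matrix.mul_apply]
    refine Finset.sum_congr rfl fun i _ => ?_
    simp only [Matrix.transpose_apply, Matrix.of_apply]
    ring
  obtain ⟨R, hR⟩ := hR
  have hinj : Function.Injective (C * B * N).mulVecLin := by
    rw [← LinearMap.ker_eq_bot, LinearMap.ker_eq_bot']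
    intro v hv
    have h0 : (C * B) *ᵥ (N *ᵥ v) = 0 := by
      rw [Matrix.mulVec_mulVec]
      exact hv
    have h1 : N *ᵥ v = 0 := by
      have h2 : (N *ᵥ v) ⬝ᵥ (N *ᵥ v) = 0 := by
        have h3 : N *ᵥ v = (C * B)ᵀ *ᵥ (R *ᵥ v) := by
          rw [Matrix.mulVec_mulVec, ← hR]
        conv_lhs => arg 2; rw [h3]
        rw [Matrix.dotProduct_mulVec, Matrix.vecMul_transpose, h0, zero_dotProduct]
      exact dotProduct_self_eq_zero.1 h2
    exact hNinj (by rw [h1, Matrix.mulVec_zero])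
  have hsurj : Function.Surjective (C * B * N).mulVecLin :=
    LinearMap.injective_iff_surjective.1 hinj
  choose g hg using hsurj
  intro x0 yref
  let x : ℕ → Fin n → ℝ := fun k => Nat.rec x0
    (fun k xk => A *ᵥ xk + (B * N) *ᵥ g (yref (k + 1) - C *ᵥ (A *ᵥ xk))) k
  refine ⟨fun k => g (yref (k + 1) - C *ᵥ (A *ᵥ x k)), x, rfl, fun k => rfl, ?_⟩
  intro k hk
  obtain ⟨m, rfl⟩ := Nat.exists_eq_add_of_le' hk
  have hx : x (m + 1) = A *ᵥ x m + (B * N) *ᵥ g (yref (m + 1) - C *ᵥ (A *ᵥ x m)) := rfl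
  have h := hg (yref (m + 1) - C *ᵥ (A *ᵥ x m))
  rw [Matrix.mulVecLin_apply, Matrix.mul_assoc, ← Matrix.mulVec_mulVec] at h
  rw [hx, Matrix.mulVec_add, h]
  abel
end
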